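/- Comparison principle in ℂⁿ: let Ω be a bounded domain in ℂⁿ and let u, v be real-valued functions of class C² on cl(Ω). Assume the complex Hessian matrix H_ℂu(z) := (∂²u/∂z_p∂z̄_q(z))_{p,q=1,…,n} is positive semidefinite for every z ∈ Ω, that det H_ℂu(z) ≥ det H_ℂv(z) at every z ∈ Ω where H_ℂv(z) is positive definite, and that u ≤ v on ∂Ω. Then u ≤ v on cl(Ω). -/

import Mathlib

open Complex Set
open scoped Topology ComplexOrder

noncomputable section

variable {n : ℕ}

/-- The tangent direction in `ℂⁿ` with `c` in the `p`-th coordinate: e.g. `cDir p 1` is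
`∂/∂x_p` and `cDir p I` is `∂/∂y_p`. -/
def cDir (p : Fin n) (c : ℂ) : Fin n → ℂ := Pi.single p c

/-- Second directional derivative of `w` at `z`, in the directions `a` and `b`. -/
def secondDeriv (w : (Fin n → ℂ) → ℝ) (z a b : Fin n → ℂ) : ℝ :=
  fderiv ℝ (fun y => fderiv ℝ w y a) z b

/-- The complex Hessian matrix of a `C²` function `w : ℂⁿ → ℝ`:
`(H_ℂ w)_{p,q} = ∂²w/∂z_p∂z̄_q
  = (1/4)(∂²w/∂x_p∂x_q + ∂²w/∂y_p∂y_q + i(∂²w/∂x_p∂y_q - ∂²w/∂y_p∂x_q))`. -/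
def complexHessian (w : (Fin n → ℂ) → ℝ) (z : Fin n → ℂ) : Matrix (Fin n) (Fin n) ℂ :=
  Matrix.of fun p q =>
    ((secondDeriv w z (cDir p 1) (cDir q 1)
        + secondDeriv w z (cDir p Complex.I) (cDir q Complex.I) : ℝ) : ℂ) / 4
    + Complex.I * ((secondDeriv w z (cDir p 1) (cDir q Complex.I)
        - secondDeriv w z (cDir p Complex.I) (cDir q 1) : ℝ) : ℂ) / 4
/-- The determinant of a positive semidefinite matrix strictly increases on adding the identity. -/
theorem Matrix.PosSemidef.re_det_lt_re_det_add_one {ι : Type*} [Fintype ι] [DecidableEq ι]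
    [Nonempty ι] {C : Matrix ι ι ℂ} (hC : C.PosSemidef) :
    C.det.re < (C + 1).det.re := by
  set l := hC.1.eigenvalues with hl
  have hl0 : ∀ i, 0 ≤ l i := hC.eigenvalues_nonneg
  have hdet : C.det = ((∏ i, l i : ℝ) : ℂ) := by
    rw [hC.1.det_eq_prod_eigenvalues]
    push_cast
    rfl
  have hdet_add : (C + 1).det = ((∏ i, (l i + 1) : ℝ) : ℂ) := by
    have h := Matrix.eval_charpoly C (-1)
    rw [hC.1.charpoly_eq, Polynomial.eval_prod] at h
    have hneg : Matrix.scalar ι (-1 : ℂ) - C = -(C + 1) := by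
      rw [map_neg, map_one]
      abel
    have hprod : ∏ i, Polynomial.eval (-1 : ℂ)
        (Polynomial.X - Polynomial.C ((hC.1.eigenvalues i : ℝ) : ℂ))
        = (-1) ^ Fintype.card ι * ((∏ i, (l i + 1) : ℝ) : ℂ) := by
      push_cast
      rw [← Finset.card_univ, ← Finset.prod_const, ← Finset.prod_mul_distrib]
      refine Finset.prod_congr rfl fun i _ => ?_
      simp only [Polynomial.eval_sub, Polynomial.eval_X, Polynomial.eval_C, hl]
      ring
    rw [hneg, Matrix.det_neg] at h
    exact mul_left_cancel₀ (pow_ne_zero _ (neg_ne_zero.2 one_ne_zero)) (h.symm.trans hprod)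
  rw [hdet, hdet_add, ofReal_re, ofReal_re]
  by_cases hpos : ∀ i, 0 < l i
  · exact Finset.prod_lt_prod_of_nonempty (fun i _ => hpos i) (fun i _ => lt_add_one _)
      Finset.univ_nonempty
  · obtain ⟨i, hi⟩ := not_forall.1 hpos
    rw [Finset.prod_eq_zero (Finset.mem_univ i) (le_antisymm (not_lt.1 hi) (hl0 i))]
    exact Finset.prod_pos fun j _ => by linarith [hl0 j]

open scoped MatrixOrder in
/-- The determinant of a positive semidefinite matrix strictly increases on adding a positive
definite matrix. -/
theorem Matrix.PosSemidef.re_det_lt_re_det_add {ι : Type*} [Fintype ι] [DecidableEq ι]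
    [Nonempty ι] {A P : Matrix ι ι ℂ} (hA : A.PosSemidef) (hP : P.PosDef) :
    A.det.re < (A + P).det.re := by
  obtain ⟨y, rfl⟩ := CStarAlgebra.nonneg_iff_eq_star_mul_self.mp hP.posSemidef.nonneg
  have hy : IsUnit y.det := by
    have h := (Matrix.isUnit_iff_isUnit_det _).1 hP.isUnit
    rw [Matrix.det_mul] at h
    exact isUnit_of_mul_isUnit_right h
  have hyH : IsUnit (star y).det := by
    rw [Matrix.star_eq_conjTranspose, Matrix.det_conjTranspose]
    exact hy.star
  set C := y⁻¹.conjTranspose * A * y⁻¹ with hC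
  have hCpsd : C.PosSemidef := hA.conjTranspose_mul_mul_same _
  have hAC : A = star y * C * y := by
    rw [hC, Matrix.conjTranspose_nonsing_inv, ← Matrix.star_eq_conjTranspose]
    simp only [Matrix.mul_assoc, Matrix.nonsing_inv_mul _ hy, Matrix.mul_one]
    rw [Matrix.mul_nonsing_inv_cancel_left _ _ hyH]
  have hAP : A + star y * y = star y * (C + 1) * y := by
    rw [hAC]
    noncomm_ring
  have hdet (M : Matrix ι ι ℂ) : (star y * M * y).det.re = Complex.normSq y.det * M.det.re := by
    rw [Matrix.det_mul, Matrix.det_mul, Matrix.star_eq_conjTranspose, Matrix.det_conjTranspose,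
      mul_right_comm, star_def, ← Complex.normSq_eq_conj_mul_self, Complex.re_ofReal_mul]
  rw [hAP, hdet, hAC, hdet]
  exact mul_lt_mul_of_pos_left hCpsd.re_det_lt_re_det_add_one (Complex.normSq_pos.2 hy.ne_zero)

/-- The second derivative is nonpositive at a local maximum. -/
theorem IsLocalMax.second_deriv_nonpos {g g' : ℝ → ℝ} {x c : ℝ} (hmax : IsLocalMax g x)
    (hg : ∀ᶠ t in 𝓝 x, HasDerivAt g (g' t) t) (hg' : HasDerivAt g' c x) : c ≤ 0 := by
  by_contra! hc
  have hderiv : deriv g =ᶠ[𝓝 x] g' := hg.mono fun t ht => ht.deriv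
  have hmin : IsLocalMin g x := by
    refine isLocalMin_of_deriv_deriv_pos ?_ hmax.deriv_eq_zero hg.self_of_nhds.continuousAt
    rw [hderiv.deriv_eq, hg'.deriv]
    exact hc
  have hconst : g =ᶠ[𝓝 x] fun _ => g x := by
    filter_upwards [hmax, hmin] with t h₁ h₂ using le_antisymm h₁ h₂
  have hzero : g' =ᶠ[𝓝 x] fun _ => 0 := by
    filter_upwards [hderiv, hconst.eventuallyEq_nhds] with t h₁ h₂
    rw [← h₁, h₂.deriv_eq, deriv_const]
  have := hg'.deriv
  rw [hzero.deriv_eq, deriv_const] at this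
  exact hc.ne this

section Line

variable {E : Type*} [NormedAddCommGroup E] [NormedSpace ℝ E] {w : E → ℝ} {z : E}

theorem hasDerivAt_add_smul (z ξ : E) (t : ℝ) : HasDerivAt (fun t : ℝ => z + t • ξ) ξ t := by
  simpa using ((hasDerivAt_id t).smul_const ξ).const_add z

/-- First derivative of a `C²` function along a line. -/
theorem ContDiffAt.eventually_hasDerivAt_line (hw : ContDiffAt ℝ 2 w z) (ξ : E) :
    ∀ᶠ t in 𝓝 (0 : ℝ), HasDerivAt (fun t : ℝ => w (z + t • ξ)) (fderiv ℝ w (z + t • ξ) ξ) t := by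
  have hcont : Filter.Tendsto (fun t : ℝ => z + t • ξ) (𝓝 0) (𝓝 z) := by
    simpa using (hasDerivAt_add_smul z ξ 0).continuousAt.tendsto
  filter_upwards [hcont.eventually (hw.eventually (by simp))] with t ht
  exact (ht.differentiableAt (by simp)).hasFDerivAt.comp_hasDerivAt t (hasDerivAt_add_smul z ξ t)

theorem ContDiffAt.differentiableAt_fderiv (hw : ContDiffAt ℝ 2 w z) :
    DifferentiableAt ℝ (fderiv ℝ w) z :=
  (hw.fderiv_right (m := 1) (by norm_num)).differentiableAt (by simp)

/-- Second derivative of a `C²` function along a line. -/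
theorem ContDiffAt.hasDerivAt_fderiv_line (hw : ContDiffAt ℝ 2 w z) (ξ : E) :
    HasDerivAt (fun t : ℝ => fderiv ℝ w (z + t • ξ) ξ) (fderiv ℝ (fderiv ℝ w) z ξ ξ) 0 := by
  have hd : HasFDerivAt (fderiv ℝ w) (fderiv ℝ (fderiv ℝ w) z) (z + (0 : ℝ) • ξ) := by
    simpa using hw.differentiableAt_fderiv.hasFDerivAt
  exact (ContinuousLinearMap.apply ℝ ℝ ξ).hasFDerivAt.comp_hasDerivAt 0
    (hd.comp_hasDerivAt 0 (hasDerivAt_add_smul z ξ 0))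

end Line

/-- The square of the Euclidean norm on `ℂⁿ`. -/
def sumNormSq (z : Fin n → ℂ) : ℝ := ∑ p, Complex.normSq (z p)

theorem sumNormSq_nonneg (z : Fin n → ℂ) : 0 ≤ sumNormSq z :=
  Finset.sum_nonneg fun _ _ => Complex.normSq_nonneg _

theorem sumNormSq_pos {z : Fin n → ℂ} (hz : z ≠ 0) : 0 < sumNormSq z := by
  obtain ⟨p, hp⟩ := Function.ne_iff.1 hz
  exact Finset.sum_pos' (fun _ _ => Complex.normSq_nonneg _)
    ⟨p, Finset.mem_univ p, Complex.normSq_pos.2 hp⟩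

theorem continuous_sumNormSq : Continuous (sumNormSq (n := n)) :=
  continuous_finsetSum _ fun p _ => Complex.continuous_normSq.comp (continuous_apply p)

theorem sumNormSq_I_smul (z : Fin n → ℂ) : sumNormSq (I • z) = sumNormSq z := by
  simp [sumNormSq]

theorem sumNormSq_line (z ξ : Fin n → ℂ) (t : ℝ) :
    sumNormSq (z + t • ξ) = sumNormSq z
      + t * (2 * ∑ p, ((z p).re * (ξ p).re + (z p).im * (ξ p).im)) + t ^ 2 * sumNormSq ξ := by
  simp only [sumNormSq, Finset.mul_sum, ← Finset.sum_add_distrib]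
  refine Finset.sum_congr rfl fun p _ => ?_
  simp [Complex.normSq_apply]
  ring

/-- At a local maximum of `u - v + ε |z|²`, the real Hessian of `v` dominates that of
`u + ε |z|²`. -/
theorem snd_fderiv_le_of_isLocalMax {u v : (Fin n → ℂ) → ℝ} {z : Fin n → ℂ} {ε : ℝ}
    (hu : ContDiffAt ℝ 2 u z) (hv : ContDiffAt ℝ 2 v z)
    (hmax : IsLocalMax (fun y => u y - v y + ε * sumNormSq y) z) (ξ : Fin n → ℂ) :
    fderiv ℝ (fderiv ℝ u) z ξ ξ + 2 * ε * sumNormSq ξ ≤ fderiv ℝ (fderiv ℝ v) z ξ ξ := by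
  set b := 2 * ∑ p, ((z p).re * (ξ p).re + (z p).im * (ξ p).im) with hb
  have hq (t : ℝ) : HasDerivAt (fun t : ℝ => sumNormSq (z + t • ξ))
      (b + 2 * t * sumNormSq ξ) t := by
    simp only [sumNormSq_line, ← hb]
    have h := (((hasDerivAt_id t).mul_const b).const_add (sumNormSq z)).add
      ((hasDerivAt_pow 2 t).mul_const (sumNormSq ξ))
    convert! h using 1
    simp
  have hq' : HasDerivAt (fun t : ℝ => b + 2 * t * sumNormSq ξ) (2 * sumNormSq ξ) 0 := by
    simpa using (((hasDerivAt_id (0 : ℝ)).const_mul 2).mul_const (sumNormSq ξ)).const_add b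
  have hline : IsLocalMax (fun t : ℝ => u (z + t • ξ) - v (z + t • ξ)
      + ε * sumNormSq (z + t • ξ)) 0 := by
    have hcont : Filter.Tendsto (fun t : ℝ => z + t • ξ) (𝓝 0) (𝓝 z) := by
      simpa using (hasDerivAt_add_smul z ξ 0).continuousAt.tendsto
    filter_upwards [hcont.eventually hmax] with t ht
    simpa using ht
  have h := hline.second_deriv_nonpos
    (g' := fun t => fderiv ℝ u (z + t • ξ) ξ - fderiv ℝ v (z + t • ξ) ξ
      + ε * (b + 2 * t * sumNormSq ξ))
    (by
      filter_upwards [hu.eventually_hasDerivAt_line ξ, hv.eventually_hasDerivAt_line ξ]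
        with t h₁ h₂ using (h₁.sub h₂).add ((hq t).const_mul ε))
    (((hu.hasDerivAt_fderiv_line ξ).sub (hv.hasDerivAt_fderiv_line ξ)).add (hq'.const_mul ε))
  linarith

theorem secondDeriv_eq {w : (Fin n → ℂ) → ℝ} {z : Fin n → ℂ} (hw : ContDiffAt ℝ 2 w z)
    (a b : Fin n → ℂ) : secondDeriv w z a b = fderiv ℝ (fderiv ℝ w) z b a := by
  have h := hw.differentiableAt_fderiv.hasFDerivAt.clm_apply (hasFDerivAt_const a z)
  rw [secondDeriv, h.fderiv]
  simp

theorem secondDeriv_comm {w : (Fin n → ℂ) → ℝ} {z : Fin n → ℂ} (hw : ContDiffAt ℝ 2 w z)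
    (a b : Fin n → ℂ) : secondDeriv w z a b = secondDeriv w z b a := by
  rw [secondDeriv_eq hw, secondDeriv_eq hw]
  exact hw.isSymmSndFDerivAt (by simp) b a

theorem isHermitian_complexHessian {w : (Fin n → ℂ) → ℝ} {z : Fin n → ℂ}
    (hw : ContDiffAt ℝ 2 w z) : (complexHessian w z).IsHermitian := by
  ext p q
  simp only [Matrix.conjTranspose_apply, complexHessian, Matrix.of_apply,
    secondDeriv_comm hw (cDir q _) (cDir p _)]
  apply Complex.ext <;> simp

theorem eq_sum_cDir (ξ : Fin n → ℂ) :
    ξ = ∑ p, ((ξ p).re • cDir p 1 + (ξ p).im • cDir p I) := by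
  ext q
  simp only [cDir, Finset.sum_apply, Pi.add_apply, Pi.smul_apply, Pi.single_apply]
  simp [Finset.sum_add_distrib, Complex.re_add_im]

/-- The Hermitian form of the complex Hessian as an average of the real Hessian over the complex
line spanned by the direction. -/
theorem re_dotProduct_complexHessian {w : (Fin n → ℂ) → ℝ} {z : Fin n → ℂ}
    (hw : ContDiffAt ℝ 2 w z) (ξ : Fin n → ℂ) :
    4 * (ξ ⬝ᵥ (complexHessian w z).mulVec (star ξ)).re =
      fderiv ℝ (fderiv ℝ w) z ξ ξ + fderiv ℝ (fderiv ℝ w) z (I • ξ) (I • ξ) := by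
  have hexp (η : Fin n → ℂ) : fderiv ℝ (fderiv ℝ w) z η η =
      ∑ p, ∑ q, ((η p).re * (η q).re * secondDeriv w z (cDir p 1) (cDir q 1)
        + (η p).re * (η q).im * secondDeriv w z (cDir p 1) (cDir q I)
        + (η p).im * (η q).re * secondDeriv w z (cDir p I) (cDir q 1)
        + (η p).im * (η q).im * secondDeriv w z (cDir p I) (cDir q I)) := by
    conv_lhs => rw [eq_sum_cDir η]
    rw [map_sum]
    simp only [secondDeriv_eq hw, map_add, map_smul, _root_.sum_apply, map_sum,
      _root_.add_apply, _root_.smul_apply, smul_eq_mul]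
    refine Finset.sum_congr rfl fun p _ => ?_
    rw [Finset.mul_sum, Finset.mul_sum, ← Finset.sum_add_distrib]
    refine Finset.sum_congr rfl fun q _ => ?_
    ring
  rw [hexp, hexp, ← Finset.sum_add_distrib]
  simp only [← Finset.sum_add_distrib, dotProduct, Matrix.mulVec, Finset.mul_sum, Complex.re_sum]
  refine Finset.sum_congr rfl fun p _ => Finset.sum_congr rfl fun q _ => ?_
  simp [complexHessian]
  ring

/-- At a local maximum of `u - v + ε |z|²`, the complex Hessian of `v` strictly dominates that
of `u`. -/
theorem posDef_complexHessian_sub_of_isLocalMax {u v : (Fin n → ℂ) → ℝ} {z : Fin n → ℂ} {ε : ℝ}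
    (hε : 0 < ε) (hu : ContDiffAt ℝ 2 u z) (hv : ContDiffAt ℝ 2 v z)
    (hmax : IsLocalMax (fun y => u y - v y + ε * sumNormSq y) z) :
    (complexHessian v z - complexHessian u z).PosDef := by
  have hherm := (isHermitian_complexHessian hv).sub (isHermitian_complexHessian hu)
  refine .of_dotProduct_mulVec_pos hherm fun x hx => ?_
  rw [Complex.pos_iff]
  refine ⟨?_, (hherm.im_star_dotProduct_mulVec_self x).symm⟩
  have hpos : 0 < ε * sumNormSq (star x) :=
    mul_pos hε (sumNormSq_pos (star_ne_zero.2 hx))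
  have h₁ := snd_fderiv_le_of_isLocalMax hu hv hmax (star x)
  have h₂ := snd_fderiv_le_of_isLocalMax hu hv hmax (I • star x)
  rw [sumNormSq_I_smul] at h₂
  have hHu := re_dotProduct_complexHessian hu (star x)
  have hHv := re_dotProduct_complexHessian hv (star x)
  rw [star_star] at hHu hHv
  rw [Matrix.sub_mulVec, dotProduct_sub, Complex.sub_re]
  linarith

/-- **Comparison principle in `ℂⁿ`** (the case `J = J_st` of Proposition 2.1, with
`ρ(z) = |z|²` as the bounded strictly plurisubharmonic function): if `u, v ∈ C²(cl Ω)` on a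
bounded domain `Ω ⊆ ℂⁿ`, the complex Hessian of `u` is positive semidefinite on `Ω`,
`det H_ℂu ≥ det H_ℂv` wherever `H_ℂv` is positive definite, and `u ≤ v` on `∂Ω`, then
`u ≤ v` on `cl Ω`. -/
theorem comparison_principle_Cn (hn : 0 < n)
    (Ω : Set (Fin n → ℂ)) (hΩo : IsOpen Ω) (hΩconn : IsConnected Ω)
    (hΩbdd : Bornology.IsBounded Ω)
    (u v : (Fin n → ℂ) → ℝ)
    (hu : ContDiffOn ℝ 2 u (closure Ω)) (hv : ContDiffOn ℝ 2 v (closure Ω))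
    (hupsd : ∀ z ∈ Ω, (complexHessian u z).PosSemidef)
    (hdet : ∀ z ∈ Ω, (complexHessian v z).PosDef →
      ((complexHessian v z).det).re ≤ ((complexHessian u z).det).re)
    (hbdry : ∀ z ∈ frontier Ω, u z ≤ v z) :
    ∀ z ∈ closure Ω, u z ≤ v z := by
  by_contra! hcon
  obtain ⟨z₁, hz₁, hlt⟩ := hcon
  have hcomp : IsCompact (closure Ω) := hΩbdd.isCompact_closure
  obtain ⟨M, hM⟩ := hcomp.bddAbove_image continuous_sumNormSq.continuousOn
  replace hM : ∀ z ∈ closure Ω, sumNormSq z ≤ M := fun z hz => hM (mem_image_of_mem _ hz)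
  have hM0 : 0 ≤ M := (sumNormSq_nonneg z₁).trans (hM z₁ hz₁)
  obtain ⟨ε, hε, hεM⟩ : ∃ ε : ℝ, 0 < ε ∧ ε * M < u z₁ - v z₁ := by
    refine ⟨(u z₁ - v z₁) / (M + 1), div_pos (sub_pos.2 hlt) (by linarith), ?_⟩
    rw [div_mul_eq_mul_div, div_lt_iff₀ (by linarith)]
    nlinarith
  obtain ⟨z₀, hz₀, hmax⟩ := hcomp.exists_isMaxOn ⟨z₁, hz₁⟩
    ((hu.continuousOn.sub hv.continuousOn).add
      (continuous_sumNormSq.const_mul ε).continuousOn)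
  have hz₀Ω : z₀ ∈ Ω := by
    by_contra hnot
    have hfr : z₀ ∈ frontier Ω := ⟨hz₀, by rwa [hΩo.interior_eq]⟩
    have h₁ : u z₁ - v z₁ + ε * sumNormSq z₁ ≤ u z₀ - v z₀ + ε * sumNormSq z₀ := hmax hz₁
    have h₂ := mul_le_mul_of_nonneg_left (hM z₀ hz₀) hε.le
    have h₃ := mul_nonneg hε.le (sumNormSq_nonneg z₁)
    linarith [hbdry z₀ hfr]
  have hnhds : closure Ω ∈ 𝓝 z₀ :=
    Filter.mem_of_superset (hΩo.mem_nhds hz₀Ω) subset_closure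
  have hP := posDef_complexHessian_sub_of_isLocalMax hε (hu.contDiffAt hnhds)
    (hv.contDiffAt hnhds) (hmax.isLocalMax hnhds)
  have hadd : complexHessian u z₀ + (complexHessian v z₀ - complexHessian u z₀)
      = complexHessian v z₀ := add_sub_cancel _ _
  have hVpos : (complexHessian v z₀).PosDef := hadd ▸ hP.posSemidef_add (hupsd z₀ hz₀Ω)
  have : Nonempty (Fin n) := ⟨⟨0, hn⟩⟩
  have hdet_lt := (hupsd z₀ hz₀Ω).re_det_lt_re_det_add hP
  rw [hadd] at hdet_lt
  exact hdet_lt.not_ge (hdet z₀ hz₀Ω hVpos)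

end
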